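/- Let f, h : ℝⁿ → ℝ be infinitely differentiable and suppose that for all multi-indices α, β ∈ ℕⁿ one has ∂^α(h·f)(0) · ∂^β f(0) = ∂^β(h·f)(0) · ∂^α f(0). Then for every v ∈ ℝⁿ and all j, k ∈ ℕ, the one-dimensional symmetry relation holds along the line through 0 in direction v: (d/dt)^j|_{t=0} (h·f)(t·v) · (d/ds)^k|_{s=0} f(s·v) = (d/dt)^k|_{t=0} (h·f)(t·v) · (d/ds)^j|_{s=0} f(s·v). -/

import Mathlib

/-- The first-order partial derivative of `f : ℝⁿ → ℝ` in the `i`-th coordinate direction. -/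
noncomputable def pderivOne {n : ℕ} (i : Fin n) (f : (Fin n → ℝ) → ℝ) : (Fin n → ℝ) → ℝ :=
  fun x => fderiv ℝ f x (Pi.single i 1)

/-- The iterated partial derivative `∂^α f` of `f : ℝⁿ → ℝ` for a multi-index `α ∈ ℕⁿ`:
the derivative in the `i`-th coordinate direction is applied `α i` times, for each `i`. -/
noncomputable def mderiv {n : ℕ} (α : Fin n → ℕ) (f : (Fin n → ℝ) → ℝ) : (Fin n → ℝ) → ℝ :=
  (List.finRange n).foldr (fun i g => (pderivOne i)^[α i] g) f

lemma pd_smooth {n : ℕ} (i : Fin n) {f : (Fin n → ℝ) → ℝ} (hf : ContDiff ℝ (⊤ : ℕ∞) f) :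
    ContDiff ℝ (⊤ : ℕ∞) (pderivOne i f) := by
  unfold pderivOne
  have h1 : ContDiff ℝ (⊤ : ℕ∞) (fderiv ℝ f) := hf.fderiv_right (by simp)
  exact h1.clm_apply contDiff_const

lemma pd_comm {n : ℕ} (i j : Fin n) {f : (Fin n → ℝ) → ℝ} (hf : ContDiff ℝ (⊤ : ℕ∞) f) :
    pderivOne i (pderivOne j f) = pderivOne j (pderivOne i f) := by
  have h1 : ContDiff ℝ (⊤ : ℕ∞) (fderiv ℝ f) := hf.fderiv_right (by simp)
  have key : ∀ (a b : Fin n) x, pderivOne a (pderivOne b f) x =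
      fderiv ℝ (fderiv ℝ f) x (Pi.single a 1) (Pi.single b 1) := by
    intro a b x
    unfold pderivOne
    rw [fderiv_clm_apply (h1.differentiable (by simp) x) (differentiableAt_const _)]
    simp
  funext x
  rw [key, key]
  have hs : IsSymmSndFDerivAt ℝ f x := by
    apply hf.contDiffAt.isSymmSndFDerivAt
    simp only [minSmoothness_of_isRCLikeNormedField]
    exact WithTop.coe_le_coe.mpr (le_top : (2 : ℕ∞) ≤ ⊤)
  exact hs _ _

lemma pd_iter_smooth {n : ℕ} (i : Fin n) (m : ℕ) {f : (Fin n → ℝ) → ℝ}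
    (hf : ContDiff ℝ (⊤ : ℕ∞) f) : ContDiff ℝ (⊤ : ℕ∞) ((pderivOne i)^[m] f) := by
  induction m with
  | zero => exact hf
  | succ m ih => rw [Function.iterate_succ_apply']; exact pd_smooth i ih

lemma pd_iter_comm {n : ℕ} (i j : Fin n) (m : ℕ) {f : (Fin n → ℝ) → ℝ}
    (hf : ContDiff ℝ (⊤ : ℕ∞) f) :
    pderivOne i ((pderivOne j)^[m] f) = (pderivOne j)^[m] (pderivOne i f) := by
  induction m with
  | zero => rfl
  | succ m ih =>
    rw [Function.iterate_succ_apply', Function.iterate_succ_apply',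
      pd_comm i j (pd_iter_smooth j m hf), ih]

lemma fold_smooth {n : ℕ} (α : Fin n → ℕ) (l : List (Fin n)) {f : (Fin n → ℝ) → ℝ}
    (hf : ContDiff ℝ (⊤ : ℕ∞) f) :
    ContDiff ℝ (⊤ : ℕ∞) (l.foldr (fun i g => (pderivOne i)^[α i] g) f) := by
  induction l with
  | nil => exact hf
  | cons a l ih => exact pd_iter_smooth a _ ih

lemma fold_notMem {n : ℕ} (α : Fin n → ℕ) (i : Fin n) (l : List (Fin n)) (hi : i ∉ l)
    (f : (Fin n → ℝ) → ℝ) :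
    l.foldr (fun k g => (pderivOne k)^[(α + Pi.single i 1 : Fin n → ℕ) k] g) f =
      l.foldr (fun k g => (pderivOne k)^[α k] g) f := by
  induction l with
  | nil => rfl
  | cons a l ih =>
    simp only [List.mem_cons, not_or] at hi
    rw [List.foldr_cons, List.foldr_cons, ih hi.2]
    simp [Pi.single_eq_of_ne (Ne.symm hi.1)]

lemma fold_mem {n : ℕ} (α : Fin n → ℕ) (i : Fin n) (l : List (Fin n)) (hl : l.Nodup)
    (hi : i ∈ l) {f : (Fin n → ℝ) → ℝ} (hf : ContDiff ℝ (⊤ : ℕ∞) f) :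
    l.foldr (fun k g => (pderivOne k)^[(α + Pi.single i 1 : Fin n → ℕ) k] g) f =
      pderivOne i (l.foldr (fun k g => (pderivOne k)^[α k] g) f) := by
  induction l with
  | nil => simp at hi
  | cons a l ih =>
    rw [List.nodup_cons] at hl
    rw [List.foldr_cons, List.foldr_cons]
    by_cases h : i = a
    · subst h
      rw [fold_notMem α i l hl.1]
      simp [Function.iterate_succ_apply']
    · have hil : i ∈ l := by simpa [h] using hi
      rw [ih hl.2 hil, pd_iter_comm i a _ (fold_smooth α l hf)]
      simp [Pi.single_eq_of_ne (Ne.symm h)]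

lemma mderiv_succ {n : ℕ} (α : Fin n → ℕ) (i : Fin n) {f : (Fin n → ℝ) → ℝ}
    (hf : ContDiff ℝ (⊤ : ℕ∞) f) :
    mderiv (α + Pi.single i 1) f = pderivOne i (mderiv α f) :=
  fold_mem α i _ (List.nodup_finRange n) (List.mem_finRange i) hf

lemma mderiv_zero' {n : ℕ} (f : (Fin n → ℝ) → ℝ) : mderiv 0 f = f := by
  unfold mderiv
  induction List.finRange n with
  | nil => rfl
  | cons a l ih => rw [List.foldr_cons, ih]; rfl

lemma line_deriv {n : ℕ} (v : Fin n → ℝ) {g : (Fin n → ℝ) → ℝ}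
    (hg : ContDiff ℝ (⊤ : ℕ∞) g) (t : ℝ) :
    HasDerivAt (fun t : ℝ => g (t • v)) (∑ i, v i * pderivOne i g (t • v)) t := by
  have h1 : HasDerivAt (fun t : ℝ => t • v) v t := by
    simpa using (hasDerivAt_id t).smul_const v
  have h2 := ((hg.differentiable (by simp) (t • v)).hasFDerivAt).comp_hasDerivAt t h1
  have h3 : fderiv ℝ g (t • v) v = ∑ i, v i * pderivOne i g (t • v) := by
    conv_lhs => rw [pi_eq_sum_univ' v]
    simp only [map_sum, map_smul, smul_eq_mul, pderivOne]
    refine Finset.sum_congr rfl fun i _ => ?_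
    congr 3
    funext k
    simp [Pi.single_apply, eq_comm]
  rw [← h3]
  exact h2

lemma exists_coeff {n : ℕ} (v : Fin n → ℝ) (j : ℕ) :
    ∃ (ι : Type) (_ : Fintype ι) (c : ι → ℝ) (a : ι → Fin n → ℕ),
      ∀ g : (Fin n → ℝ) → ℝ, ContDiff ℝ (⊤ : ℕ∞) g →
        iteratedDeriv j (fun t : ℝ => g (t • v)) =
          fun t => ∑ p, c p * mderiv (a p) g (t • v) := by
  induction j with
  | zero =>
    refine ⟨Unit, inferInstance, fun _ => 1, fun _ => 0, fun g _ => ?_⟩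
    funext t
    simp [mderiv_zero']
  | succ j ih =>
    obtain ⟨ι, _, c, a, H⟩ := ih
    refine ⟨ι × Fin n, inferInstance, fun p => c p.1 * v p.2,
      fun p => a p.1 + Pi.single p.2 1, fun g hg => ?_⟩
    rw [iteratedDeriv_succ, H g hg]
    funext t
    have h1 : HasDerivAt (fun t : ℝ => ∑ p, c p * mderiv (a p) g (t • v))
        (∑ p, c p * ∑ i, v i * pderivOne i (mderiv (a p) g) (t • v)) t :=
      HasDerivAt.fun_sum fun p _ =>
        (line_deriv v (fold_smooth (a p) _ hg) t).const_mul (c p)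
    rw [h1.deriv, Fintype.sum_prod_type]
    refine Finset.sum_congr rfl fun p _ => ?_
    rw [Finset.mul_sum]
    refine Finset.sum_congr rfl fun i _ => ?_
    rw [mderiv_succ _ _ hg, mul_assoc]

/-- If `f, h : ℝⁿ → ℝ` are smooth and satisfy
`∂^α(h·f)(0)·∂^β f(0) = ∂^β(h·f)(0)·∂^α f(0)` for all multi-indices `α, β ∈ ℕⁿ`, then for
every `v ∈ ℝⁿ` and all `j, k ∈ ℕ` the one-dimensional symmetry relation holds along the
line through `0` in direction `v`. -/
theorem stmt_4 {n : ℕ} (f h : (Fin n → ℝ) → ℝ)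
    (hf : ContDiff ℝ (⊤ : ℕ∞) f) (hh : ContDiff ℝ (⊤ : ℕ∞) h)
    (hsym : ∀ α β : Fin n → ℕ,
      mderiv α (fun x => h x * f x) 0 * mderiv β f 0 =
        mderiv β (fun x => h x * f x) 0 * mderiv α f 0) :
    ∀ v : Fin n → ℝ, ∀ j k : ℕ,
      iteratedDeriv j (fun t : ℝ => h (t • v) * f (t • v)) 0 *
          iteratedDeriv k (fun s : ℝ => f (s • v)) 0 =
        iteratedDeriv k (fun t : ℝ => h (t • v) * f (t • v)) 0 *
          iteratedDeriv j (fun s : ℝ => f (s • v)) 0 := by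
  intro v j k
  obtain ⟨ι, _, c, a, H⟩ := exists_coeff v j
  obtain ⟨κ, _, d, b, K⟩ := exists_coeff v k
  have hF : ContDiff ℝ (⊤ : ℕ∞) (fun x => h x * f x) := hh.mul hf
  have e1 := congrFun (H _ hF) 0
  have e2 := congrFun (K _ hF) 0
  have e3 := congrFun (H _ hf) 0
  have e4 := congrFun (K _ hf) 0
  simp only [zero_smul] at e1 e2 e3 e4
  rw [e1, e2, e3, e4, Finset.sum_mul_sum, Finset.sum_mul_sum, Finset.sum_comm]
  refine Finset.sum_congr rfl fun q _ => Finset.sum_congr rfl fun p _ => ?_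
  linear_combination c p * d q * hsym (a p) (b q)
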